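/- arXiv:2604.12846 — 3 statements merged into one kernel-verified Lean document; each statement's English description precedes it below -/
import Mathlib

section
/- Let (M,E,V) be a path geometry, ξ₀ ∈ Γ(E) a nowhere vanishing section, (∇,Π) the Weyl structure associated to ξ₀, R the curvature of ∇, and α ∈ Ω¹(M) the one-form with Π_E = α ξ₀. Then for η₁,η₂ ∈ Γ(V) and ζᵢ := ι(𝓛(ξ₀,ηᵢ)) one has R(ξ₀,η₁)(η₂) = −½ α([ξ₀,ζ₁]) η₂ − α([ξ₀,ζ₂]) η₁. -/
/-!
An algebraic model of the smooth calculus on a smooth manifold `M`: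
`C` plays the role of the algebra `C^∞(M,ℝ)` of smooth functions and `X` plays the
role of the `C^∞(M,ℝ)`-module `𝔛(M)` of smooth vector fields, together with the Lie
bracket of vector fields and the derivative of functions along vector fields
(i.e. a Lie–Rinehart algebra over `ℝ`).  Distributions (smooth subbundles of `TM`)
are modelled as `C`-submodules of `X`, linear connections on `TM` as operators
`X → X → X` with the usual tensoriality and Leibniz properties, and one-forms as
`C`-linear maps `X →ₗ[C] C`.
-/

open scoped TensorProduct

/-- The algebra of smooth functions together with the module of smooth vector
fields on a smooth manifold, with the Lie bracket and directional derivative. -/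
structure VFCalc where
  /-- the smooth functions `C^∞(M,ℝ)` -/
  C : Type
  /-- the smooth vector fields `𝔛(M)` -/
  X : Type
  [ringC : CommRing C]
  [algC : Algebra ℝ C]
  [grpX : AddCommGroup X]
  [modX : Module C X]
  /-- the Lie bracket of vector fields -/
  lie : X → X → X
  /-- the derivative `D ψ f = ψ · f` of a function along a vector field -/
  D : X → C → C
  lie_add_left : ∀ ψ₁ ψ₂ φ, lie (ψ₁ + ψ₂) φ = lie ψ₁ φ + lie ψ₂ φ
  lie_skew : ∀ ψ φ, lie φ ψ = - lie ψ φ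
  jacobi : ∀ ψ₁ ψ₂ ψ₃, lie ψ₁ (lie ψ₂ ψ₃) = lie (lie ψ₁ ψ₂) ψ₃ + lie ψ₂ (lie ψ₁ ψ₃)
  lie_smul_right : ∀ (f : C) (ψ φ : X), lie ψ (f • φ) = f • lie ψ φ + (D ψ f) • φ
  D_add_left : ∀ ψ₁ ψ₂ f, D (ψ₁ + ψ₂) f = D ψ₁ f + D ψ₂ f
  D_smul_left : ∀ (g : C) ψ f, D (g • ψ) f = g * D ψ f
  D_add_right : ∀ ψ f₁ f₂, D ψ (f₁ + f₂) = D ψ f₁ + D ψ f₂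
  D_mul_right : ∀ ψ f₁ f₂, D ψ (f₁ * f₂) = f₁ * D ψ f₂ + f₂ * D ψ f₁
  D_algebraMap : ∀ ψ r, D ψ (algebraMap ℝ C r) = 0

attribute [instance] VFCalc.ringC VFCalc.algC VFCalc.grpX VFCalc.modX

/-- the exterior derivative of a one-form, `dα(ψ,φ) = ψ·α(φ) − φ·α(ψ) − α([ψ,φ])` -/
def VFCalc.dform (P : VFCalc) (α : P.X →ₗ[P.C] P.C) (ψ φ : P.X) : P.C :=
  P.D ψ (α φ) - P.D φ (α ψ) - α (P.lie ψ φ)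

/-- A (generalized) path geometry on a manifold `M` of dimension `2n+1`:
distributions `E, V ⊂ TM` (of rank `1` and `n`) with `E ∩ V = 0`, `V` involutive,
such that the Levi bracket induces an isomorphism `E ⊗ V ≅ Q := TM/(E ⊕ V)`. -/
structure PathGeometry extends VFCalc where
  /-- the rank one distribution `E` -/
  E : Submodule C X
  /-- the rank `n` distribution `V` -/
  V : Submodule C X
  inf_bot : E ⊓ V = ⊥
  involutive : ∀ η₁ ∈ V, ∀ η₂ ∈ V, lie η₁ η₂ ∈ V
  /-- the Levi bracket `E ⊗ V → Q = TM/(E ⊔ V)` is an isomorphism of bundles -/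
  leviIso : (↥E ⊗[C] ↥V) ≃ₗ[C] (X ⧸ (E ⊔ V))
  leviIso_apply : ∀ (ξ : ↥E) (η : ↥V),
    leviIso (ξ ⊗ₜ[C] η) = Submodule.Quotient.mk (lie (ξ : X) (η : X))

namespace PathGeometry

variable (P : PathGeometry)

/-- the corank one distribution `H = E ⊕ V` -/
def H : Submodule P.C P.X := P.E ⊔ P.V

/-- the quotient bundle `Q = TM/H` -/
abbrev Q := P.X ⧸ P.H

/-- the quotient projection `q : TM → Q` -/
def q : P.X →ₗ[P.C] P.Q := P.H.mkQ

/-- the Levi bracket `𝓛(ψ,φ) = q([ψ,φ])` -/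
def levi (ψ φ : P.X) : P.Q := P.q (P.lie ψ φ)

/-- the constant function `½` -/
noncomputable def half : P.C := algebraMap ℝ P.C (1/2)

/-- A (local) scale: a nowhere vanishing smooth section `ξ₀` of the line bundle `E`,
i.e. a trivialization of `E`, modelled as a basis of `E` as free rank one module. -/
structure IsScale (ξ₀ : P.X) : Prop where
  mem : ξ₀ ∈ P.E
  span : ∀ ξ ∈ P.E, ∃ f : P.C, ξ = f • ξ₀
  basis : ∀ f : P.C, f • ξ₀ = 0 → f = 0

end PathGeometry

/-- A linear connection on `TM`. -/
structure Conn (P : VFCalc) where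
  /-- the covariant derivative `cov ψ φ = ∇_ψ φ` -/
  cov : P.X → P.X → P.X
  add_left : ∀ ψ₁ ψ₂ φ, cov (ψ₁ + ψ₂) φ = cov ψ₁ φ + cov ψ₂ φ
  smul_left : ∀ (f : P.C) ψ φ, cov (f • ψ) φ = f • cov ψ φ
  add_right : ∀ ψ φ₁ φ₂, cov ψ (φ₁ + φ₂) = cov ψ φ₁ + cov ψ φ₂
  leibniz : ∀ (f : P.C) ψ φ, cov ψ (f • φ) = f • cov ψ φ + (P.D ψ f) • φ

namespace Conn

variable {P : VFCalc} (cn : Conn P)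

/-- the torsion `τ(ψ₁,ψ₂) = ∇_{ψ₁}ψ₂ − ∇_{ψ₂}ψ₁ − [ψ₁,ψ₂]` -/
def torsion (ψ₁ ψ₂ : P.X) : P.X := cn.cov ψ₁ ψ₂ - cn.cov ψ₂ ψ₁ - P.lie ψ₁ ψ₂

/-- the curvature `R(ψ₁,ψ₂)(ψ₃) = ∇_{ψ₁}∇_{ψ₂}ψ₃ − ∇_{ψ₂}∇_{ψ₁}ψ₃ − ∇_{[ψ₁,ψ₂]}ψ₃` -/
def curv (ψ₁ ψ₂ ψ₃ : P.X) : P.X :=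
  cn.cov ψ₁ (cn.cov ψ₂ ψ₃) - cn.cov ψ₂ (cn.cov ψ₁ ψ₃) - cn.cov (P.lie ψ₁ ψ₂) ψ₃

end Conn

/-- The Weyl structure associated to a scale `ξ₀`: a linear connection `∇` on `TM`
together with a decomposition `TM = E ⊕ V ⊕ ι(Q)` (encoded by the splitting
`ι : Q → TM` of `q`) such that `E`, `V`, `ι(Q)` are parallel, `∇ξ₀ = 0`,
`ι ∘ 𝓛 : E ⊗ V → ι(Q)` is parallel, the torsion satisfies `τ(E,V) ⊂ ι(Q)`,
`τ(H,ι(Q)) ⊂ H` and the normalization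
`𝓛(τ(ξ₀,ζ₁),η₂) = 2𝓛(ξ₀,τ(η₁,ζ₂))` for `ζᵢ = ι(𝓛(ξ₀,ηᵢ))`. -/
structure WeylStructure (P : PathGeometry) (ξ₀ : P.X) where
  conn : Conn P.toVFCalc
  ι : P.Q →ₗ[P.C] P.X
  q_ι : ∀ w, P.q (ι w) = w
  parE : ∀ ψ : P.X, ∀ ξ ∈ P.E, conn.cov ψ ξ ∈ P.E
  parV : ∀ ψ : P.X, ∀ η ∈ P.V, conn.cov ψ η ∈ P.V
  parQ : ∀ (ψ : P.X) (w : P.Q), conn.cov ψ (ι w) ∈ LinearMap.range ι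
  parScale : ∀ ψ : P.X, conn.cov ψ ξ₀ = 0
  parLevi : ∀ ψ : P.X, ∀ ξ ∈ P.E, ∀ η ∈ P.V,
    conn.cov ψ (ι (P.levi ξ η)) = ι (P.levi (conn.cov ψ ξ) η) + ι (P.levi ξ (conn.cov ψ η))
  torsEV : ∀ ξ ∈ P.E, ∀ η ∈ P.V, conn.torsion ξ η ∈ LinearMap.range ι
  torsHQ : ∀ ψ ∈ P.H, ∀ w : P.Q, conn.torsion ψ (ι w) ∈ P.H
  norm : ∀ η₁ ∈ P.V, ∀ η₂ ∈ P.V,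
    P.levi (conn.torsion ξ₀ (ι (P.levi ξ₀ η₁))) η₂
      = (2 : P.C) • P.levi ξ₀ (conn.torsion η₁ (ι (P.levi ξ₀ η₂)))

/-!
Write `Z η := ι(𝓛(ξ₀,η))` for `η ∈ Γ(V)` and `A(η) := α([ξ₀, Z η])`. The axioms of a Weyl structure
determine the brackets (`∇ξ₀ = 0`, and `∇` commutes with `Z`):

* `[ξ₀,η] = ∇_{ξ₀}η + Z η`;
* `[ξ₀,Z η] = Z(∇_{ξ₀}η) + A(η) ξ₀ + b` with `b ∈ V`;
* `[η₁,Z η₂] = Z(∇_{η₁}η₂) - ∇_{Z η₂}η₁ + c ξ₀ + ½ A(η₁) η₂` for some function `c`;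
  the coefficient `½ A(η₁)` is what the normalization of the torsion says.

Put `T(η₁,η₂) := R(ξ₀,η₁)(η₂) + ½ A(η₁) η₂ + A(η₂) η₁ ∈ Γ(V)`; the claim is `T = 0`.
The `Q`-part of the Jacobi identity for `ξ₀, η₁, η₂` gives `τ(η₁,η₂) = 0`, and its `V`-part then
gives `T(η₁,η₂) = T(η₂,η₁)`. The `Q`-part of the Jacobi identity for `ξ₀, η₁, Z η₂` identifies
`𝓛(ξ₀,T(η₁,η₂))` with `q` of the torsion `τ(Z η₁,Z η₂)` up to sign, so, `η ↦ 𝓛(ξ₀,η)` being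
injective on `V`, `T` is also skew-symmetric. Hence `2T = 0`.
-/

/-! ### Elementary rules for the Lie bracket -/

namespace VFCalc

variable (P : VFCalc)

lemma lie_add_right (x y z : P.X) : P.lie x (y + z) = P.lie x y + P.lie x z := by
  rw [P.lie_skew (y + z) x, P.lie_add_left, P.lie_skew y x, P.lie_skew z x]
  abel

lemma lie_neg_right (x y : P.X) : P.lie x (-y) = -P.lie x y := by
  have h0 : P.lie x 0 = 0 := by simpa using P.lie_add_right x 0 0
  have h := P.lie_add_right x y (-y)
  rw [add_neg_cancel, h0] at h
  exact (neg_eq_of_add_eq_zero_right h.symm).symm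

lemma lie_sub_right (x y z : P.X) : P.lie x (y - z) = P.lie x y - P.lie x z := by
  rw [sub_eq_add_neg, lie_add_right, lie_neg_right, sub_eq_add_neg]

lemma lie_smul_left (f : P.C) (x y : P.X) :
    P.lie (f • x) y = f • P.lie x y - P.D y f • x := by
  rw [P.lie_skew y (f • x), P.lie_smul_right, P.lie_skew x y]
  module

end VFCalc

/-! ### The Levi bracket modulo `H` -/

namespace PathGeometry

variable (P : PathGeometry)

lemma half_add_half : P.half + P.half = 1 := by
  unfold half
  rw [← map_add]
  norm_num

/-- The functions contain `½`, so vector fields have no `2`-torsion. -/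
lemma eq_zero_of_add_self {x : P.X} (h : x + x = 0) : x = 0 := by
  have h1 := P.half_add_half
  linear_combination (norm := module) P.half • h - h1 • x

lemma lie_self (x : P.X) : P.lie x x = 0 := by
  apply P.eq_zero_of_add_self
  nth_rewrite 1 [P.lie_skew x x]
  simp

lemma mem_H_of_E {x : P.X} (h : x ∈ P.E) : x ∈ P.H := Submodule.mem_sup_left h

lemma mem_H_of_V {x : P.X} (h : x ∈ P.V) : x ∈ P.H := Submodule.mem_sup_right h

lemma q_eq_zero {x : P.X} (h : x ∈ P.H) : P.q x = 0 := by
  simpa [q] using h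

lemma eq_zero_of_mem {x : P.X} (hE : x ∈ P.E) (hV : x ∈ P.V) : x = 0 := by
  have : x ∈ P.E ⊓ P.V := ⟨hE, hV⟩
  rwa [P.inf_bot, Submodule.mem_bot] at this

lemma q_lie_VV {x y : P.X} (hx : x ∈ P.V) (hy : y ∈ P.V) : P.q (P.lie x y) = 0 :=
  P.q_eq_zero (P.mem_H_of_V (P.involutive x hx y hy))

lemma levi_add (x y z : P.X) : P.levi x (y + z) = P.levi x y + P.levi x z := by
  simp [levi, VFCalc.lie_add_right]

lemma levi_sub (x y z : P.X) : P.levi x (y - z) = P.levi x y - P.levi x z := by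
  simp [levi, VFCalc.lie_sub_right]

lemma levi_smul (x : P.X) (f : P.C) {y : P.X} (hy : y ∈ P.V) :
    P.levi x (f • y) = f • P.levi x y := by
  unfold levi
  rw [P.lie_smul_right, map_add, map_smul,
    P.q_eq_zero (P.mem_H_of_V (P.V.smul_mem _ hy)), add_zero]

lemma q_lie_smul_E {ξ η : P.X} (hξ : ξ ∈ P.E) (f : P.C) :
    P.q (P.lie η (f • ξ)) = -(f • P.levi ξ η) := by
  rw [P.lie_smul_right, map_add, map_smul,
    P.q_eq_zero (P.mem_H_of_E (P.E.smul_mem _ hξ)), add_zero, P.lie_skew ξ η]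
  simp [levi]

lemma q_lie_scale_smul {ξ : P.X} (hξ : ξ ∈ P.E) (f : P.C) :
    P.q (P.lie ξ (f • ξ)) = 0 := by
  rw [P.lie_smul_right, P.lie_self, smul_zero, zero_add]
  exact P.q_eq_zero (P.mem_H_of_E (P.E.smul_mem _ hξ))

end PathGeometry

/-! ### Weyl structures: the parallel map `Z` and the projection onto `E` -/

namespace Conn

variable {P : VFCalc} (cn : Conn P)

lemma sub_right (x y z : P.X) : cn.cov x (y - z) = cn.cov x y - cn.cov x z := by
  have h := cn.add_right x (y - z) z
  rw [sub_add_cancel] at h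
  rw [h, add_sub_cancel_right]

end Conn

namespace WeylStructure

variable {P : PathGeometry} {ξ₀ : P.X} (W : WeylStructure P ξ₀)

lemma q_cov_ι (ψ : P.X) (w : P.Q) : W.ι (P.q (W.conn.cov ψ (W.ι w))) = W.conn.cov ψ (W.ι w) := by
  obtain ⟨v, hv⟩ := W.parQ ψ w
  rw [← hv, W.q_ι]

/-- The map `Z : η ↦ ι(𝓛(ξ₀,η))` from `V` to `ι(Q)`. -/
def Z (η : P.X) : P.X := W.ι (P.levi ξ₀ η)

lemma q_Z (η : P.X) : P.q (W.Z η) = P.levi ξ₀ η := W.q_ι _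

lemma Z_sub (x y : P.X) : W.Z (x - y) = W.Z x - W.Z y := by
  simp [Z, P.levi_sub]

/-- `Z` is parallel. -/
lemma cov_Z (hξ₀ : P.IsScale ξ₀) (ψ : P.X) {η : P.X} (hη : η ∈ P.V) :
    W.conn.cov ψ (W.Z η) = W.Z (W.conn.cov ψ η) := by
  have h := W.parLevi ψ ξ₀ hξ₀.mem η hη
  have h0 : P.levi 0 η = 0 := by
    have := P.lie_smul_left (0 : P.C) 0 η
    simp only [zero_smul, smul_zero, sub_zero] at this
    simp [PathGeometry.levi, this]
  rw [W.parScale, h0, map_zero, zero_add] at h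
  exact h

section Projection

variable {α : P.X →ₗ[P.C] P.C} (hα : ∀ ψ : P.X, ψ - α ψ • ξ₀ - W.ι (P.q ψ) ∈ P.V)
include hα

lemma alpha_scale (hξ₀ : P.IsScale ξ₀) : α ξ₀ = 1 := by
  have h := hα ξ₀
  rw [P.q_eq_zero (P.mem_H_of_E hξ₀.mem), map_zero, sub_zero] at h
  have h2 := P.eq_zero_of_mem (P.E.sub_mem hξ₀.mem (P.E.smul_mem _ hξ₀.mem)) h
  have h3 := hξ₀.basis (1 - α ξ₀) (by rw [sub_smul, one_smul, h2])
  exact (sub_eq_zero.mp h3).symm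

/-- Since `ξ₀` is a basis of `E` and the Levi bracket is injective on `E ⊗ V`, the map
`η ↦ 𝓛(ξ₀,η)` is injective on `V`; the form `α` splits off the factor `ξ₀`. -/
lemma levi_inj (hξ₀ : P.IsScale ξ₀) {η : P.X} (hη : η ∈ P.V) (h : P.levi ξ₀ η = 0) : η = 0 := by
  have h1 : P.leviIso ((⟨ξ₀, hξ₀.mem⟩ : P.E) ⊗ₜ[P.C] (⟨η, hη⟩ : P.V)) = 0 := by
    rw [P.leviIso_apply]
    exact h
  have h2 := (LinearEquiv.map_eq_zero_iff _).mp h1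
  have h3 := congrArg
    (TensorProduct.lift ((LinearMap.lsmul P.C P.V).comp (α.comp P.E.subtype))) h2
  simp only [TensorProduct.lift.tmul, map_zero] at h3
  have h4 : α ξ₀ • η = 0 := congrArg Subtype.val h3
  rwa [W.alpha_scale hα hξ₀, one_smul] at h4

/-- A section of `H` is a multiple of `ξ₀` plus a section of `V`. -/
lemma exists_of_mem_H {ψ : P.X} (h : ψ ∈ P.H) : ∃ c : P.C, ∃ d ∈ P.V, ψ = c • ξ₀ + d := by
  refine ⟨α ψ, _, hα ψ, ?_⟩
  rw [P.q_eq_zero h, map_zero]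
  abel

end Projection

/-! ### Brackets in terms of the Weyl connection -/

lemma lie_scale_V (hξ₀ : P.IsScale ξ₀) {η : P.X} (hη : η ∈ P.V) :
    P.lie ξ₀ η = W.conn.cov ξ₀ η + W.Z η := by
  obtain ⟨w, hw⟩ := W.torsEV ξ₀ hξ₀.mem η hη
  rw [Conn.torsion, W.parScale, sub_zero] at hw
  have h := congrArg P.q hw
  rw [W.q_ι, map_sub, P.q_eq_zero (P.mem_H_of_V (W.parV ξ₀ η hη)), zero_sub] at h
  rw [h, map_neg] at hw
  change -(W.Z η) = _ at hw
  linear_combination (norm := module) hw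

lemma torsion_scale_Z (hξ₀ : P.IsScale ξ₀) {η : P.X} (hη : η ∈ P.V) :
    W.conn.torsion ξ₀ (W.Z η) = W.Z (W.conn.cov ξ₀ η) - P.lie ξ₀ (W.Z η) := by
  rw [Conn.torsion, W.parScale, sub_zero, W.cov_Z hξ₀ ξ₀ hη]

section Brackets

variable {α : P.X →ₗ[P.C] P.C} (hα : ∀ ψ : P.X, ψ - α ψ • ξ₀ - W.ι (P.q ψ) ∈ P.V)
include hα

lemma lie_scale_Z (hξ₀ : P.IsScale ξ₀) {η : P.X} (hη : η ∈ P.V) :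
    ∃ b ∈ P.V, P.lie ξ₀ (W.Z η) =
      W.Z (W.conn.cov ξ₀ η) + α (P.lie ξ₀ (W.Z η)) • ξ₀ + b := by
  refine ⟨_, hα (P.lie ξ₀ (W.Z η)), ?_⟩
  have h := P.q_eq_zero (W.torsHQ ξ₀ (P.mem_H_of_E hξ₀.mem) (P.levi ξ₀ η))
  change P.q (W.conn.torsion ξ₀ (W.Z η)) = 0 at h
  rw [W.torsion_scale_Z hξ₀ hη, map_sub, W.q_Z, sub_eq_zero] at h
  rw [← h]
  change _ = _ + (_ - W.Z (W.conn.cov ξ₀ η))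
  abel

/-- The normalization condition determines the `V`-component of `τ(η₁,Z η₂)`. -/
lemma lie_V_Z (hξ₀ : P.IsScale ξ₀) {η₁ η₂ : P.X} (h₁ : η₁ ∈ P.V) (h₂ : η₂ ∈ P.V) :
    ∃ c : P.C, P.lie η₁ (W.Z η₂) =
      W.Z (W.conn.cov η₁ η₂) - W.conn.cov (W.Z η₂) η₁ + c • ξ₀
        + (P.half * α (P.lie ξ₀ (W.Z η₁))) • η₂ := by
  obtain ⟨b, hb, hb'⟩ := W.lie_scale_Z hα hξ₀ h₁
  obtain ⟨c, d, hd, hcd⟩ := W.exists_of_mem_H hα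
    (W.torsHQ η₁ (P.mem_H_of_V h₁) (P.levi ξ₀ η₂))
  change W.conn.torsion η₁ (W.Z η₂) = _ at hcd
  have hn := W.norm η₁ h₁ η₂ h₂
  change P.levi (W.conn.torsion ξ₀ (W.Z η₁)) η₂
    = (2 : P.C) • P.levi ξ₀ (W.conn.torsion η₁ (W.Z η₂)) at hn
  set A := α (P.lie ξ₀ (W.Z η₁)) with hA
  have ht : W.conn.torsion ξ₀ (W.Z η₁) = (-A) • ξ₀ + -b := by
    rw [W.torsion_scale_Z hξ₀ h₁, hb']
    module
  have hl : P.levi (W.conn.torsion ξ₀ (W.Z η₁)) η₂ = (-A) • P.levi ξ₀ η₂ := by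
    rw [ht, PathGeometry.levi, P.lie_add_left, P.lie_smul_left, map_add, map_sub, map_smul,
      P.q_lie_VV (P.V.neg_mem hb) h₂,
      P.q_eq_zero (P.mem_H_of_E (P.E.smul_mem _ hξ₀.mem)), sub_zero, add_zero]
    rfl
  have hr : P.levi ξ₀ (W.conn.torsion η₁ (W.Z η₂)) = P.levi ξ₀ d := by
    rw [hcd, P.levi_add, PathGeometry.levi, P.q_lie_scale_smul hξ₀.mem, zero_add]
  rw [hl, hr] at hn
  have h0 : (2 : P.C) • d + A • η₂ = 0 := by
    apply W.levi_inj hα hξ₀ (P.V.add_mem (P.V.smul_mem _ hd) (P.V.smul_mem _ h₂))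
    rw [P.levi_add, P.levi_smul _ _ hd, P.levi_smul _ _ h₂, ← hn]
    module
  refine ⟨-c, ?_⟩
  rw [Conn.torsion, W.cov_Z hξ₀ η₁ h₂] at hcd
  have hh := P.half_add_half
  linear_combination (norm := module) -hcd - P.half • h0 + hh • d

/-- The torsion vanishes on `V × V`: this is the `Q`-part of the Jacobi identity for
`ξ₀, η₁, η₂`. -/
lemma lie_V_V (hξ₀ : P.IsScale ξ₀) {η₁ η₂ : P.X} (h₁ : η₁ ∈ P.V) (h₂ : η₂ ∈ P.V) :
    P.lie η₁ η₂ = W.conn.cov η₁ η₂ - W.conn.cov η₂ η₁ := by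
  have hV := W.parV
  have hj := congrArg P.q (P.jacobi ξ₀ η₁ η₂)
  obtain ⟨c, hc⟩ := W.lie_V_Z hα hξ₀ h₁ h₂
  obtain ⟨c', hc'⟩ := W.lie_V_Z hα hξ₀ h₂ h₁
  rw [W.lie_scale_V hξ₀ h₁, W.lie_scale_V hξ₀ h₂, P.lie_add_left, P.lie_add_right,
    P.lie_skew η₂ (W.Z η₁), hc, hc'] at hj
  have e : ∀ x ∈ P.V, P.q x = 0 := fun x hx => P.q_eq_zero (P.mem_H_of_V hx)
  simp only [map_add, map_sub, map_neg, map_smul, W.q_Z,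
    P.q_lie_VV (hV ξ₀ η₁ h₁) h₂, P.q_lie_VV h₁ (hV ξ₀ η₂ h₂),
    e _ (hV _ _ h₁), e _ (hV _ _ h₂), e _ h₁, e _ h₂,
    P.q_eq_zero (P.mem_H_of_E hξ₀.mem), smul_zero, add_zero, zero_add, sub_zero] at hj
  rw [← sub_eq_zero]
  apply W.levi_inj hα hξ₀ (P.V.sub_mem (P.involutive _ h₁ _ h₂)
    (P.V.sub_mem (hV _ _ h₂) (hV _ _ h₁)))
  rw [P.levi_sub, P.levi_sub]
  change P.levi ξ₀ (P.lie η₁ η₂) = _ at hj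
  rw [hj]
  abel

end Brackets

/-! ### The curvature on `E × V` -/

section Curvature

/-- The difference `T(η₁,η₂)` of the two sides of the curvature formula. -/
noncomputable def defect (α : P.X →ₗ[P.C] P.C) (η₁ η₂ : P.X) : P.X :=
  W.conn.curv ξ₀ η₁ η₂ + (P.half * α (P.lie ξ₀ (W.Z η₁))) • η₂ + α (P.lie ξ₀ (W.Z η₂)) • η₁

lemma curv_scale_V (hξ₀ : P.IsScale ξ₀) {η₁ : P.X} (h₁ : η₁ ∈ P.V) (η₂ : P.X) :
    W.conn.curv ξ₀ η₁ η₂ = W.conn.cov ξ₀ (W.conn.cov η₁ η₂) - W.conn.cov η₁ (W.conn.cov ξ₀ η₂)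
      - W.conn.cov (W.conn.cov ξ₀ η₁) η₂ - W.conn.cov (W.Z η₁) η₂ := by
  rw [Conn.curv, W.lie_scale_V hξ₀ h₁, W.conn.add_left]
  abel

lemma defect_mem (α : P.X →ₗ[P.C] P.C) {η₁ η₂ : P.X} (h₁ : η₁ ∈ P.V) (h₂ : η₂ ∈ P.V) :
    W.defect α η₁ η₂ ∈ P.V := by
  have hV := W.parV
  refine P.V.add_mem (P.V.add_mem ?_ (P.V.smul_mem _ h₂)) (P.V.smul_mem _ h₁)
  exact P.V.sub_mem (P.V.sub_mem (hV _ _ (hV _ _ h₂)) (hV _ _ (hV _ _ h₂))) (hV _ _ h₂)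

variable {α : P.X →ₗ[P.C] P.C} (hα : ∀ ψ : P.X, ψ - α ψ • ξ₀ - W.ι (P.q ψ) ∈ P.V)
include hα

/-- Symmetry of the defect: the `V`-part of the Jacobi identity for `ξ₀, η₁, η₂`. -/
lemma defect_symm (hξ₀ : P.IsScale ξ₀) {η₁ η₂ : P.X} (h₁ : η₁ ∈ P.V) (h₂ : η₂ ∈ P.V) :
    W.defect α η₁ η₂ = W.defect α η₂ η₁ := by
  have hV := W.parV
  have hj := P.jacobi ξ₀ η₁ η₂
  obtain ⟨c, hc⟩ := W.lie_V_Z hα hξ₀ h₁ h₂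
  obtain ⟨c', hc'⟩ := W.lie_V_Z hα hξ₀ h₂ h₁
  rw [W.lie_scale_V hξ₀ h₁, W.lie_scale_V hξ₀ h₂, P.lie_add_left, P.lie_add_right,
    P.lie_skew η₂ (W.Z η₁), hc, hc', W.lie_V_V hα hξ₀ h₁ h₂,
    W.lie_V_V hα hξ₀ (hV ξ₀ η₁ h₁) h₂, W.lie_V_V hα hξ₀ h₁ (hV ξ₀ η₂ h₂),
    W.lie_scale_V hξ₀ (P.V.sub_mem (hV _ _ h₂) (hV _ _ h₁)), W.conn.sub_right, W.Z_sub] at hj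
  have hh := P.half_add_half
  -- The `ξ₀`-components of the brackets `[ηᵢ,Z ηⱼ]` leave a remainder in `E`, which is also in `V`.
  have key : W.defect α η₁ η₂ - W.defect α η₂ η₁ = (c - c') • ξ₀ := by
    rw [defect, defect, W.curv_scale_V hξ₀ h₁, W.curv_scale_V hξ₀ h₂]
    linear_combination (norm := module) hj + α (P.lie ξ₀ (W.Z η₁)) • hh • η₂
      - α (P.lie ξ₀ (W.Z η₂)) • hh • η₁
  rw [← sub_eq_zero]
  apply P.eq_zero_of_mem _ (P.V.sub_mem (W.defect_mem α h₁ h₂) (W.defect_mem α h₂ h₁))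
  rw [key]
  exact P.E.smul_mem _ hξ₀.mem

/-- The `Q`-part of the Jacobi identity for `ξ₀, η₁, Z η₂`. The right-hand side is
`-q(τ(Z η₁,Z η₂))`. -/
lemma levi_defect (hξ₀ : P.IsScale ξ₀) {η₁ η₂ : P.X} (h₁ : η₁ ∈ P.V) (h₂ : η₂ ∈ P.V) :
    P.levi ξ₀ (W.defect α η₁ η₂) = P.q (P.lie (W.Z η₁) (W.Z η₂))
      - P.levi ξ₀ (W.conn.cov (W.Z η₁) η₂) + P.levi ξ₀ (W.conn.cov (W.Z η₂) η₁) := by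
  have hV := W.parV
  have hj := congrArg P.q (P.jacobi ξ₀ η₁ (W.Z η₂))
  obtain ⟨c, hc⟩ := W.lie_V_Z hα hξ₀ h₁ h₂
  obtain ⟨c₁, hc₁⟩ := W.lie_V_Z hα hξ₀ (hV ξ₀ η₁ h₁) h₂
  obtain ⟨c₂, hc₂⟩ := W.lie_V_Z hα hξ₀ h₁ (hV ξ₀ η₂ h₂)
  obtain ⟨b, hb, hb'⟩ := W.lie_scale_Z hα hξ₀ h₂
  obtain ⟨b', hbb, hbb'⟩ := W.lie_scale_Z hα hξ₀ (hV η₁ η₂ h₂)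
  have e : ∀ x ∈ P.V, P.q x = 0 := fun x hx => P.q_eq_zero (P.mem_H_of_V hx)
  have hL : ∀ x, P.q (P.lie ξ₀ x) = P.levi ξ₀ x := fun _ => rfl
  have h0 : P.levi ξ₀ ξ₀ = 0 := by rw [← hL, P.lie_self, map_zero]
  rw [hb', hc, W.lie_scale_V hξ₀ h₁, P.lie_add_left, P.lie_add_right, P.lie_add_right,
    P.lie_add_right, P.lie_add_right, P.lie_sub_right, hc₁, hc₂, hbb'] at hj
  simp only [map_add, map_sub, map_smul, W.q_Z, P.q_lie_smul_E hξ₀.mem,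
    P.q_lie_VV h₁ hb, hL, P.levi_smul _ _ h₂,
    e _ (hV _ _ h₁), e _ (hV _ _ h₂), e _ (hV _ _ (hV _ _ h₁)),
    e _ h₂, e _ hbb, h0, neg_zero,
    P.q_eq_zero (P.mem_H_of_E hξ₀.mem), smul_zero, add_zero, sub_zero] at hj
  rw [defect, W.curv_scale_V hξ₀ h₁, P.levi_add, P.levi_add, P.levi_sub, P.levi_sub, P.levi_sub,
    P.levi_smul _ _ h₁, P.levi_smul _ _ h₂]
  linear_combination (norm := module) hj

lemma defect_eq_zero (hξ₀ : P.IsScale ξ₀) {η₁ η₂ : P.X} (h₁ : η₁ ∈ P.V) (h₂ : η₂ ∈ P.V) :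
    W.defect α η₁ η₂ = 0 := by
  apply P.eq_zero_of_add_self
  nth_rewrite 2 [W.defect_symm hα hξ₀ h₁ h₂]
  apply W.levi_inj hα hξ₀ (P.V.add_mem (W.defect_mem α h₁ h₂) (W.defect_mem α h₂ h₁))
  rw [P.levi_add, W.levi_defect hα hξ₀ h₁ h₂, W.levi_defect hα hξ₀ h₂ h₁,
    P.lie_skew (W.Z η₁) (W.Z η₂), map_neg]
  abel

end Curvature

end WeylStructure

/-- second formula of Theorem 2.7 of the paper.  Let `(M,E,V)` be a
path geometry, `ξ₀` a nowhere vanishing section of `E`, `(∇,Π)` the associated Weyl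
structure, `R` the curvature of `∇`, and `α ∈ Ω¹(M)` the one-form with `Π_E = α ξ₀`.
Then for `η₁, η₂ ∈ Γ(V)` and `ζᵢ := ι(𝓛(ξ₀,ηᵢ))` one has
`R(ξ₀,η₁)(η₂) = −½ α([ξ₀,ζ₁]) η₂ − α([ξ₀,ζ₂]) η₁`. -/
theorem curv_E_V_formula (P : PathGeometry) (ξ₀ : P.X) (hξ₀ : P.IsScale ξ₀)
    (W : WeylStructure P ξ₀) (α : P.X →ₗ[P.C] P.C)
    (hα : ∀ ψ : P.X, ψ - α ψ • ξ₀ - W.ι (P.q ψ) ∈ P.V) :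
    ∀ η₁ ∈ P.V, ∀ η₂ ∈ P.V,
      W.conn.curv ξ₀ η₁ η₂ =
        -((P.half * α (P.lie ξ₀ (W.ι (P.levi ξ₀ η₁)))) • η₂)
          - (α (P.lie ξ₀ (W.ι (P.levi ξ₀ η₂)))) • η₁ := by
  intro η₁ h₁ η₂ h₂
  have h := W.defect_eq_zero hα hξ₀ h₁ h₂
  unfold WeylStructure.defect WeylStructure.Z at h
  linear_combination (norm := module) h
end

section
/- Let (M,E,V) be a path geometry, ξ₀ ∈ Γ(E) a nowhere vanishing section, (∇,Π) the Weyl structure associated to ξ₀, R the curvature of ∇, and α ∈ Ω¹(M) the one-form with Π_E = α ξ₀. Then for η₁,η₂,η₃ ∈ Γ(V) and ζ₃ := ι(𝓛(ξ₀,η₃)) one has R(η₁,η₂)(η₃) = −α([η₁,ζ₃]) η₂ + α([η₂,ζ₃]) η₁. -/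
/-!
An algebraic model of the smooth calculus on a smooth manifold `M`:
`C` plays the role of the algebra `C^∞(M,ℝ)` of smooth functions and `X` plays the
role of the `C^∞(M,ℝ)`-module `𝔛(M)` of smooth vector fields, together with the Lie
bracket of vector fields and the derivative of functions along vector fields
(i.e. a Lie–Rinehart algebra over `ℝ`).  Distributions (smooth subbundles of `TM`)
are modelled as `C`-submodules of `X`, linear connections on `TM` as operators
`X → X → X` with the usual tensoriality and Leibniz properties, and one-forms as
`C`-linear maps `X →ₗ[C] C`.
-/

open scoped TensorProduct

/-!
Write `K η = 𝓛(ξ₀, η)`.  Since `ξ₀` trivializes `E`, the Levi isomorphism shows that `K` is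
injective on `V` (`levi_scale_injective`), so it suffices to compute `K (R(η₁,η₂)(η₃))`.

Because `∇ξ₀ = 0` and `ι ∘ 𝓛` is parallel, `∇_ψ (ι (K η)) = ι (K (∇_ψ η))`; because
`τ(V, ι(Q)) ⊂ H` and `V` is parallel, `q (∇_η ζ) = q [η, ζ]` for `η ∈ V`, `ζ ∈ ι(Q)`.  Hence
`K (∇_η η') = q [η, ι (K η')]` (`levi_cov`).  Decomposing `[η₂, ζ₃]` along `E ⊕ V ⊕ ι(Q)` and
using involutivity of `V`, one gets
`K (∇_{η₁} ∇_{η₂} η₃) = q [η₁, [η₂, ζ₃]] + α([η₂, ζ₃]) K η₁` (`levi_cov_cov`).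
In the curvature the double brackets cancel by the Jacobi identity, which leaves the two
`α`-terms.
-/

namespace PathGeometry

variable (P : PathGeometry)

lemma lie_add_right (ψ φ₁ φ₂ : P.X) : P.lie ψ (φ₁ + φ₂) = P.lie ψ φ₁ + P.lie ψ φ₂ := by
  rw [P.lie_skew (φ₁ + φ₂) ψ, P.lie_add_left, P.lie_skew φ₁ ψ, P.lie_skew φ₂ ψ, neg_add]

lemma levi_add_right (ψ φ₁ φ₂ : P.X) : P.levi ψ (φ₁ + φ₂) = P.levi ψ φ₁ + P.levi ψ φ₂ := by
  simp [levi, lie_add_right]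

lemma levi_sub_right (ψ φ₁ φ₂ : P.X) : P.levi ψ (φ₁ - φ₂) = P.levi ψ φ₁ - P.levi ψ φ₂ :=
  eq_sub_of_add_eq (by rw [← levi_add_right, sub_add_cancel])

lemma levi_skew (ψ φ : P.X) : P.levi φ ψ = -P.levi ψ φ := by
  rw [levi, P.lie_skew, map_neg, levi]

lemma levi_zero_left (φ : P.X) : P.levi 0 φ = 0 := by
  have h := P.lie_add_left 0 0 φ
  rw [add_zero, left_eq_add] at h
  rw [levi, h, map_zero]

lemma q_of_mem_E {ξ : P.X} (h : ξ ∈ P.E) : P.q ξ = 0 :=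
  (Submodule.Quotient.mk_eq_zero _).2 (Submodule.mem_sup_left h)

lemma q_of_mem_V {η : P.X} (h : η ∈ P.V) : P.q η = 0 :=
  (Submodule.Quotient.mk_eq_zero _).2 (Submodule.mem_sup_right h)

/-- `φ ↦ 𝓛(ψ, φ)` is tensorial on sections of `H`. -/
lemma levi_smul_right (f : P.C) (ψ : P.X) {φ : P.X} (h : P.q φ = 0) :
    P.levi ψ (f • φ) = f • P.levi ψ φ := by
  rw [levi, P.lie_smul_right, map_add, map_smul, map_smul, h, smul_zero, add_zero, levi]

/-- As `ξ₀` trivializes `E`, the Levi isomorphism `E ⊗ V ≅ Q` makes `𝓛(ξ₀, ·)` injective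
on `V`. -/
lemma levi_scale_injective {ξ₀ : P.X} (hξ₀ : P.IsScale ξ₀) {η : P.X} (hη : η ∈ P.V)
    (h : P.levi ξ₀ η = 0) : η = 0 := by
  have hbij : Function.Bijective
      (LinearMap.toSpanSingleton P.C P.E (⟨ξ₀, hξ₀.mem⟩ : P.E)) := by
    constructor
    · rw [injective_iff_map_eq_zero]
      intro f hf
      exact hξ₀.basis f (congrArg Subtype.val hf)
    · rintro ⟨ξ, hξ⟩
      obtain ⟨f, rfl⟩ := hξ₀.span ξ hξ
      exact ⟨f, rfl⟩
  let e : P.C ≃ₗ[P.C] P.E := LinearEquiv.ofBijective _ hbij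
  have he : e 1 = ⟨ξ₀, hξ₀.mem⟩ := one_smul P.C (⟨ξ₀, hξ₀.mem⟩ : P.E)
  -- the composite `V ≅ C ⊗ V ≅ E ⊗ V ≅ Q` is `𝓛(ξ₀, ·)`
  let F := (TensorProduct.lid P.C P.V).symm ≪≫ₗ
    (TensorProduct.congr e (LinearEquiv.refl P.C P.V)) ≪≫ₗ P.leviIso
  have hF : F ⟨η, hη⟩ = 0 := by
    simp only [F, LinearEquiv.trans_apply, TensorProduct.lid_symm_apply,
      TensorProduct.congr_tmul, LinearEquiv.refl_apply, he, P.leviIso_apply]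
    exact h
  exact congrArg Subtype.val ((LinearEquiv.map_eq_zero_iff F).1 hF)

end PathGeometry

namespace WeylStructure

variable {P : PathGeometry} {ξ₀ : P.X} (W : WeylStructure P ξ₀)

/-- The Weyl connection in directions of `V` is determined on `V` by the bracket with `ι(Q)`. -/
lemma levi_cov (hξ₀ : P.IsScale ξ₀) {η η' : P.X} (hη : η ∈ P.V) (hη' : η' ∈ P.V) :
    P.levi ξ₀ (W.conn.cov η η') = P.q (P.lie η (W.ι (P.levi ξ₀ η'))) := by
  have h₁ := W.parLevi η ξ₀ hξ₀.mem η' hη'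
  rw [W.parScale, P.levi_zero_left, map_zero, zero_add] at h₁
  have h₂ : P.q (W.conn.torsion η (W.ι (P.levi ξ₀ η'))) = 0 :=
    (Submodule.Quotient.mk_eq_zero _).2 (W.torsHQ η (Submodule.mem_sup_right hη) _)
  rw [Conn.torsion, h₁, map_sub, map_sub, W.q_ι, P.q_of_mem_V (W.parV _ η hη), sub_zero,
    sub_eq_zero] at h₂
  exact h₂

lemma levi_cov_cov (hξ₀ : P.IsScale ξ₀) (α : P.X →ₗ[P.C] P.C)
    (hα : ∀ ψ : P.X, ψ - α ψ • ξ₀ - W.ι (P.q ψ) ∈ P.V)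
    {η₁ η₂ η₃ : P.X} (h₁ : η₁ ∈ P.V) (h₂ : η₂ ∈ P.V) (h₃ : η₃ ∈ P.V) :
    P.levi ξ₀ (W.conn.cov η₁ (W.conn.cov η₂ η₃))
      = P.q (P.lie η₁ (P.lie η₂ (W.ι (P.levi ξ₀ η₃))))
        + α (P.lie η₂ (W.ι (P.levi ξ₀ η₃))) • P.levi ξ₀ η₁ := by
  rw [W.levi_cov hξ₀ h₁ (W.parV _ _ h₃), W.levi_cov hξ₀ h₂ h₃]
  set φ := P.lie η₂ (W.ι (P.levi ξ₀ η₃))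
  have hv := P.q_of_mem_V (P.involutive η₁ h₁ _ (hα φ))
  have hdec : φ = (φ - α φ • ξ₀ - W.ι (P.q φ)) + (α φ • ξ₀ + W.ι (P.q φ)) := by abel
  have h : P.q (P.lie η₁ φ) = α φ • P.levi η₁ ξ₀ + P.q (P.lie η₁ (W.ι (P.q φ))) := by
    conv_lhs => rw [hdec]
    rw [P.lie_add_right, P.lie_add_right, map_add, map_add, hv, zero_add,
      ← P.levi_smul_right _ _ (P.q_of_mem_E hξ₀.mem)]
    rfl
  rw [h, P.levi_skew ξ₀ η₁, smul_neg]
  abel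

end WeylStructure

/-- third formula of Theorem 2.7 of the paper.  Let `(M,E,V)` be a
path geometry, `ξ₀` a nowhere vanishing section of `E`, `(∇,Π)` the associated Weyl
structure, `R` the curvature of `∇`, and `α ∈ Ω¹(M)` the one-form with `Π_E = α ξ₀`.
Then for `η₁, η₂, η₃ ∈ Γ(V)` and `ζ₃ := ι(𝓛(ξ₀,η₃))` one has
`R(η₁,η₂)(η₃) = −α([η₁,ζ₃]) η₂ + α([η₂,ζ₃]) η₁`. -/
theorem curv_V_V_formula (P : PathGeometry) (ξ₀ : P.X) (hξ₀ : P.IsScale ξ₀)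
    (W : WeylStructure P ξ₀) (α : P.X →ₗ[P.C] P.C)
    (hα : ∀ ψ : P.X, ψ - α ψ • ξ₀ - W.ι (P.q ψ) ∈ P.V) :
    ∀ η₁ ∈ P.V, ∀ η₂ ∈ P.V, ∀ η₃ ∈ P.V,
      W.conn.curv η₁ η₂ η₃ =
        -((α (P.lie η₁ (W.ι (P.levi ξ₀ η₃)))) • η₂)
          + (α (P.lie η₂ (W.ι (P.levi ξ₀ η₃)))) • η₁ := by
  intro η₁ h₁ η₂ h₂ η₃ h₃
  have h₁₂ := P.involutive η₁ h₁ η₂ h₂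
  have hR : W.conn.curv η₁ η₂ η₃ ∈ P.V :=
    P.V.sub_mem (P.V.sub_mem (W.parV _ _ (W.parV _ _ h₃)) (W.parV _ _ (W.parV _ _ h₃)))
      (W.parV _ _ h₃)
  refine sub_eq_zero.1 (P.levi_scale_injective hξ₀
    (P.V.sub_mem hR (P.V.add_mem (P.V.neg_mem (P.V.smul_mem _ h₂)) (P.V.smul_mem _ h₁))) ?_)
  rw [neg_add_eq_sub, P.levi_sub_right, P.levi_sub_right,
    P.levi_smul_right _ _ (P.q_of_mem_V h₁), P.levi_smul_right _ _ (P.q_of_mem_V h₂),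
    Conn.curv, P.levi_sub_right, P.levi_sub_right, W.levi_cov_cov hξ₀ α hα h₁ h₂ h₃,
    W.levi_cov_cov hξ₀ α hα h₂ h₁ h₃, W.levi_cov hξ₀ h₁₂ h₃, P.jacobi η₁ η₂, map_add]
  abel
end

section
/- Let (M,E,V) be a path geometry for which the subbundle V is involutive. Then locally around each point x ∈ M there exists a distinguished Weyl structure, i.e. a nowhere-vanishing local section α₀ of E* with D(α₀) = 0 (equivalently d(L(α₀)) = 0). -/
/-!
The scale is `α = dg` for a function `g` that is constant along the leaves of `V` and has non-zero
derivative along `E`; such a form is closed and vanishes on `V`.  The existence of `g` is the local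
Frobenius theorem for `V`, together with `E ∩ V = 0`.

Near `x` let `A y` be the projection onto `V y` along a fixed complement of `V x`
(`VSPathGeometry.exists_projection`).  For `y` near `x`, solve `γ' = A(γ) (y - x)` backwards from
`γ(1) = y` and put `f y = γ(0)`.  Involutivity says that `(A' (A v)) t` is symmetric in `v` and `t`
(`VSPathGeometry.integrable_projection`), and this makes the variation of `γ` in a direction
`v ∈ V y` minus `s • A(γ(s)) v` a solution of a linear equation vanishing at `s = 1`; hence `df`
kills `V` (`variation_eq_zero`).  Moreover `df x = id - A x`, which is injective on `E x`, so
`g = l ∘ f` works for a suitable linear functional `l`.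

Smooth dependence of `γ` on `y` is obtained by applying the implicit function theorem to the
integral equation in the Banach space `C([0,1], F)`.  At `y = x` its linearization in `γ` is the
identity.  Smoothness of the equation is that of the superposition operator `γ ↦ A ∘ γ`
(`contDiff_superpose`), for which `A` is cut off to have compact support.
-/

/-!
Since the statement is purely local, the manifold `N` resp. `M = 𝒫TN` carrying the
path geometry is modelled by (an open subset `U` of) a real vector space `F` of
dimension `2n+1` (a chart).  Vector fields are maps `F → F`, one-forms are maps
`F → (F →L[ℝ] ℝ)`, and the distributions `E` and `V` are given by assigning to each
point a subspace of the (trivialized) tangent space `F`.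
-/

open scoped Topology

variable {F : Type*} [NormedAddCommGroup F] [NormedSpace ℝ F] [FiniteDimensional ℝ F]

/-- The Lie bracket of vector fields on (an open subset of) the vector space `F`:
`[ψ,φ](x) = Dφ(x)(ψ(x)) − Dψ(x)(φ(x))`. -/
noncomputable def vlie (ψ φ : F → F) (x : F) : F :=
  fderiv ℝ φ x (ψ x) - fderiv ℝ ψ x (φ x)

/-- A (generalized) path geometry on the open set `U ⊆ F`, `dim F = 2n+1`: smooth
distributions `E`, `V` of rank `1` and `n` with `E ∩ V = {0}`, `V` involutive, such
that the bundle map `E ⊗ V → TM/(E ⊕ V)` induced by the Lie bracket is an isomorphism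
(by the rank assumptions this is equivalent to the injectivity condition `levi`
below: brackets of nonvanishing sections of `E` and `V` are nonzero modulo `H = E ⊕ V`). -/
structure VSPathGeometry (n : ℕ) (U : Set F) (E V : F → Submodule ℝ F) : Prop where
  isOpen : IsOpen U
  dimF : Module.finrank ℝ F = 2 * n + 1
  rankE : ∀ x ∈ U, Module.finrank ℝ (E x) = 1
  rankV : ∀ x ∈ U, Module.finrank ℝ (V x) = n
  inf_bot : ∀ x ∈ U, E x ⊓ V x = ⊥
  /-- `E` is a smooth distribution: it locally admits smooth nonvanishing frames -/
  smoothE : ∀ x ∈ U, ∃ W ⊆ U, IsOpen W ∧ x ∈ W ∧ ∃ ξ : F → F,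
    ContDiffOn ℝ (⊤ : ℕ∞) ξ W ∧ ∀ y ∈ W, ξ y ≠ 0 ∧ E y = Submodule.span ℝ {ξ y}
  /-- `V` is a smooth distribution: it locally admits smooth frames -/
  smoothV : ∀ x ∈ U, ∃ W ⊆ U, IsOpen W ∧ x ∈ W ∧ ∃ η : Fin n → (F → F),
    (∀ i, ContDiffOn ℝ (⊤ : ℕ∞) (η i) W) ∧
    ∀ y ∈ W, V y = Submodule.span ℝ (Set.range fun i => η i y)
  /-- `V` is involutive -/
  involutive : ∀ ψ φ : F → F, ContDiffOn ℝ (⊤ : ℕ∞) ψ U → ContDiffOn ℝ (⊤ : ℕ∞) φ U →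
    (∀ y ∈ U, ψ y ∈ V y) → (∀ y ∈ U, φ y ∈ V y) →
    ∀ y ∈ U, vlie ψ φ y ∈ V y
  /-- the Levi bracket `E ⊗ V → TM/H` is an isomorphism -/
  levi : ∀ x ∈ U, ∀ ξ η : F → F, ContDiffOn ℝ (⊤ : ℕ∞) ξ U → ContDiffOn ℝ (⊤ : ℕ∞) η U →
    (∀ y ∈ U, ξ y ∈ E y) → (∀ y ∈ U, η y ∈ V y) → ξ x ≠ 0 → η x ≠ 0 →
    vlie ξ η x ∉ E x ⊔ V x

open scoped ContDiff unitInterval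

/-! ### Smoothness of superposition operators -/

section Superposition

universe u

/-- Pointwise application of a curve of operators to a curve of vectors, as a bounded bilinear
map on spaces of continuous functions on `[0,1]`. -/
noncomputable def applyCurve (E G : Type*) [NormedAddCommGroup E] [NormedSpace ℝ E]
    [NormedAddCommGroup G] [NormedSpace ℝ G] :
    C(I, E →L[ℝ] G) →L[ℝ] C(I, E) →L[ℝ] C(I, G) :=
  LinearMap.mkContinuous₂
    (LinearMap.mk₂ ℝ
      (fun (a : C(I, E →L[ℝ] G)) (h : C(I, E)) => (⟨fun s => a s (h s), by fun_prop⟩ : C(I, G)))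
      (by intros; ext; simp) (by intros; ext; simp) (by intros; ext; simp) (by intros; ext; simp))
    1 (by
      intro a h
      rw [ContinuousMap.norm_le _ (by positivity)]
      intro s
      simp only [one_mul, LinearMap.mk₂_apply, ContinuousMap.coe_mk]
      exact (a s).le_of_opNorm_le_of_le (a.norm_coe_le_norm s) (h.norm_coe_le_norm s))

variable {E G : Type*} [NormedAddCommGroup E] [NormedSpace ℝ E]
  [NormedAddCommGroup G] [NormedSpace ℝ G]

@[simp] lemma applyCurve_apply (a : C(I, E →L[ℝ] G)) (h : C(I, E)) (s : I) :
    applyCurve E G a h s = a s (h s) := rfl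

lemma contDiff_applyCurve {n : ℕ∞ω} : ContDiff ℝ n (applyCurve E G) :=
  ContinuousLinearMap.contDiff (𝕜 := ℝ) (n := n) (E := C(I, E →L[ℝ] G))
    (F := C(I, E) →L[ℝ] C(I, G)) (applyCurve E G)

/-- The superposition operator `γ ↦ f ∘ γ` on continuous curves; the junk value `0` is used when
`f` is not continuous. -/
noncomputable def superpose (f : E → G) (γ : C(I, E)) : C(I, G) :=
  open Classical in if hf : Continuous f then ⟨fun s => f (γ s), hf.comp γ.continuous⟩ else 0

set_option linter.unusedSectionVars false in
lemma superpose_apply {f : E → G} (hf : Continuous f) (γ : C(I, E)) (s : I) :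
    superpose f γ s = f (γ s) := by
  simp [superpose, hf]

/-- Since `f'` is Lipschitz, the first-order Taylor remainder is quadratic uniformly along the
curve, hence `γ ↦ f ∘ γ` is differentiable in the sup norm. -/
lemma hasFDerivAt_superpose {f : E → G} (hf : ContDiff ℝ ∞ f) (hc : HasCompactSupport f)
    (γ : C(I, E)) :
    HasFDerivAt (superpose f) (applyCurve E G (superpose (fderiv ℝ f) γ)) γ := by
  have hf' : ContDiff ℝ ∞ (fderiv ℝ f) := hf.fderiv_right (by simp)
  obtain ⟨K, hK⟩ := hf'.lipschitzWith_of_hasCompactSupport (hc.fderiv ℝ) (by simp)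
  rw [hasFDerivAt_iff_isLittleO_nhds_zero]
  have hO : (fun h : C(I, E) => superpose f (γ + h) - superpose f γ -
      applyCurve E G (superpose (fderiv ℝ f) γ) h) =O[𝓝 0] fun h => ‖h‖ ^ 2 := by
    refine Asymptotics.IsBigO.of_bound K (Filter.Eventually.of_forall fun h => ?_)
    rw [ContinuousMap.norm_le _ (by positivity)]
    intro s
    simp only [ContinuousMap.sub_apply, superpose_apply hf.continuous,
      superpose_apply hf'.continuous, applyCurve_apply, ContinuousMap.add_apply]
    have hd : ∀ z, HasFDerivAt f (fderiv ℝ f z) z := fun z =>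
      (hf.differentiable (by simp) z).hasFDerivAt
    have hs := h.norm_coe_le_norm s
    have key := Convex.norm_image_sub_le_of_norm_hasFDerivWithin_le' (𝕜 := ℝ) (f := f)
      (C := K * ‖h s‖) (s := Metric.closedBall (γ s) ‖h s‖) (x := γ s) (y := γ s + h s)
      (f' := fderiv ℝ f) (φ := fderiv ℝ f (γ s))
      (fun z _ => (hd z).hasFDerivWithinAt) (fun z hz => by
        rw [← dist_eq_norm]
        refine (hK.dist_le_mul z (γ s)).trans ?_
        gcongr
        exact hz) (convex_closedBall _ _) (by simp) (by simp)
    simp only [add_sub_cancel_left] at key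
    refine key.trans ?_
    simp only [norm_pow, norm_norm]
    calc K * ‖h s‖ * ‖h s‖ ≤ K * ‖h‖ * ‖h‖ := by gcongr
      _ = K * ‖h‖ ^ 2 := by ring
  refine hO.trans_isLittleO ?_
  exact Asymptotics.isLittleO_norm_pow_id (by norm_num)

/-- The superposition operator of a smooth compactly supported map is smooth: its derivative is
again a superposition operator, that of `f'`, followed by a bounded linear map. -/
lemma contDiff_superpose {E : Type u} [NormedAddCommGroup E] [NormedSpace ℝ E]
    {G : Type u} [NormedAddCommGroup G] [NormedSpace ℝ G] {f : E → G}
    (hf : ContDiff ℝ ∞ f) (hc : HasCompactSupport f) : ContDiff ℝ ∞ (superpose f) := by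
  rw [contDiff_infty]
  intro n
  induction n generalizing G with
  | zero =>
    rw [Nat.cast_zero, contDiff_zero, continuous_iff_continuousAt]
    exact fun γ => (hasFDerivAt_superpose hf hc γ).continuousAt
  | succ n ih =>
    push_cast
    rw [contDiff_succ_iff_hasFDerivAt]
    refine ⟨fun γ => applyCurve E G (superpose (fderiv ℝ f) γ), ?_, hasFDerivAt_superpose hf hc⟩
    exact contDiff_applyCurve.comp (ih (hf.fderiv_right (by simp)) (hc.fderiv ℝ))

lemma hasFDerivAt_applyCurve_superpose {f : E → E →L[ℝ] G} (hf : ContDiff ℝ ∞ f)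
    (hc : HasCompactSupport f) {X : Type*} [NormedAddCommGroup X] [NormedSpace ℝ X]
    {ψ : X → C(I, E)} {ψ' : X →L[ℝ] C(I, E)} {y : X} (hψ : HasFDerivAt ψ ψ' y) :
    HasFDerivAt (fun y => applyCurve E G (superpose f (ψ y)))
      (applyCurve E G ∘L applyCurve E (E →L[ℝ] G) (superpose (fderiv ℝ f) (ψ y)) ∘L ψ') y := by
  have h0 := ContinuousLinearMap.hasFDerivAt (𝕜 := ℝ) (E := C(I, E →L[ℝ] G))
    (F := C(I, E) →L[ℝ] C(I, G)) (x := superpose f (ψ y)) (applyCurve E G)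
  have h1 := (hasFDerivAt_superpose hf hc (ψ y)).comp y hψ
  exact HasFDerivAt.comp (F := C(I, E →L[ℝ] G)) (G := C(I, E) →L[ℝ] C(I, G)) y h0 h1

end Superposition

/-! ### The implicit function on a neighbourhood -/

section Implicit

/-- The implicit function of a smooth equation is smooth on a whole neighbourhood: invertibility
of the partial derivative is an open condition, and by uniqueness the implicit functions based at
nearby points of the graph agree. -/
lemma exists_smooth_implicit {E₁ E₂ : Type*} [NormedAddCommGroup E₁] [NormedSpace ℝ E₁]
    [CompleteSpace E₁] [NormedAddCommGroup E₂] [NormedSpace ℝ E₂] [CompleteSpace E₂]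
    {H : E₁ × E₂ → E₂} (hH : ContDiff ℝ ∞ H) (u : E₁ × E₂)
    (hid : fderiv ℝ H u ∘L .inr ℝ E₁ E₂ = ContinuousLinearMap.id ℝ E₂) :
    ∃ ψ : E₁ → E₂, ψ u.1 = u.2 ∧
      ∀ᶠ y in 𝓝 u.1, ContDiffAt ℝ ∞ ψ y ∧ H (y, ψ y) = H u := by
  have hinv : (fderiv ℝ H u ∘L .inr ℝ E₁ E₂).IsInvertible := by
    rw [hid]; exact ⟨.refl ℝ E₂, rfl⟩
  have hu : ContDiffAt ℝ ∞ H u := hH.contDiffAt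
  set ψ := hu.implicitFunction (by simp) hinv with hψ
  have hψu : ψ u.1 = u.2 := hu.implicitFunction_apply_self (by simp) hinv
  have hψs : ContDiffAt ℝ ∞ ψ u.1 := hu.contDiffAt_implicitFunction (by simp) hinv
  have hcont : ∀ᶠ y in 𝓝 u.1, ContinuousAt ψ y := by
    have h1 : ContDiffAt ℝ 1 ψ u.1 := hψs.of_le (by simp)
    exact (h1.eventually (by simp)).mono fun y hy => hy.continuousAt
  have hopen : ∀ᶠ y in 𝓝 u.1, (fderiv ℝ H (y, ψ y) ∘L .inr ℝ E₁ E₂).IsInvertible := by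
    have hc : ContinuousAt (fun y => fderiv ℝ H (y, ψ y) ∘L .inr ℝ E₁ E₂) u.1 := by
      have hd : Continuous (fderiv ℝ H) := hH.continuous_fderiv (by simp)
      have hg : ContinuousAt (fun y => (y, ψ y)) u.1 := continuousAt_id.prodMk hψs.continuousAt
      have := hd.continuousAt.comp (f := fun y => (y, ψ y)) hg
      exact this.clm_comp continuousAt_const
    have hn : Set.range ContinuousLinearEquiv.toContinuousLinearMap ∈
        𝓝 (fderiv ℝ H (u.1, ψ u.1) ∘L .inr ℝ E₁ E₂) := by
      rw [hψu]
      obtain ⟨e, he⟩ := hinv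
      rw [← he]
      exact e.nhds
    exact hc.eventually hn
  refine ⟨ψ, hψu, ?_⟩
  have hsol : ∀ᶠ y in 𝓝 u.1, H (y, ψ y) = H u :=
    hu.eventually_apply_implicitFunction (by simp) hinv
  filter_upwards [hcont, hopen, hsol, hsol.eventually_nhds] with y hcy hiy hsy hny
  refine ⟨?_, hsy⟩
  have hy : ContDiffAt ℝ ∞ H (y, ψ y) := hH.contDiffAt
  refine (hy.contDiffAt_implicitFunction (by simp) hiy).congr_of_eventuallyEq ?_
  have hun := hy.eventually_apply_eq_iff_implicitFunction (by simp) hiy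
  have hg : Filter.Tendsto (fun z => (z, ψ z)) (𝓝 y) (𝓝 (y, ψ y)) :=
    (continuousAt_id.prodMk hcy)
  filter_upwards [hg.eventually hun, hny] with z hz hz'
  exact (hz.1 (hz'.trans hsy.symm)).symm

end Implicit

/-! ### First integrals of an integrable projection field -/

section Frobenius

/-- The extension of a curve on `[0,1]` to `ℝ`, constant on each side of the interval. -/
noncomputable def extendCurve {G : Type*} [TopologicalSpace G] (g : C(I, G)) : ℝ → G :=
  Set.IccExtend zero_le_one g

lemma continuous_extendCurve {G : Type*} [TopologicalSpace G] (g : C(I, G)) :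
    Continuous (extendCurve g) :=
  g.continuous.Icc_extend'

lemma extendCurve_of_mem {G : Type*} [TopologicalSpace G] (g : C(I, G)) {s : ℝ}
    (hs : s ∈ Set.Icc (0 : ℝ) 1) : extendCurve g s = g ⟨s, hs⟩ :=
  Set.IccExtend_of_mem _ _ hs

/-- The operator `g ↦ (s ↦ ∫ τ in s..1, g τ)` on continuous curves. -/
noncomputable def primitiveCurve (G : Type*) [NormedAddCommGroup G] [NormedSpace ℝ G] :
    C(I, G) →L[ℝ] C(I, G) :=
  LinearMap.mkContinuous
    { toFun := fun g => ⟨fun s => ∫ τ in (s : ℝ)..1, extendCurve g τ, by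
        have h : Continuous fun s : ℝ => ∫ τ in (1 : ℝ)..s, extendCurve g τ :=
          intervalIntegral.continuous_primitive
            (fun a b => (continuous_extendCurve g).intervalIntegrable a b) 1
        simp_rw [intervalIntegral.integral_symm (1 : ℝ)]
        exact (h.comp continuous_subtype_val).neg⟩
      map_add' := by
        intro f g
        ext s
        exact intervalIntegral.integral_add ((continuous_extendCurve f).intervalIntegrable _ _)
          ((continuous_extendCurve g).intervalIntegrable _ _)
      map_smul' := by
        intro c g
        ext s
        exact intervalIntegral.integral_smul c (extendCurve g) }
    1 (by
      intro g
      rw [ContinuousMap.norm_le _ (by positivity), one_mul]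
      intro s
      have h := intervalIntegral.norm_integral_le_of_norm_le_const (a := (s : ℝ)) (b := 1)
        (f := extendCurve g) (C := ‖g‖) (fun τ _ => g.norm_coe_le_norm _)
      refine h.trans (mul_le_of_le_one_right (norm_nonneg _) ?_)
      have h0 := s.2.1
      have h1 := s.2.2
      rw [abs_le]
      constructor <;> linarith)

lemma primitiveCurve_apply {G : Type*} [NormedAddCommGroup G] [NormedSpace ℝ G]
    (g : C(I, G)) (s : I) : primitiveCurve G g s = ∫ τ in (s : ℝ)..1, extendCurve g τ := rfl

lemma hasDerivAt_primitive {G : Type*} [NormedAddCommGroup G] [NormedSpace ℝ G]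
    [CompleteSpace G] (g : C(I, G)) (s : ℝ) :
    HasDerivAt (fun s : ℝ => ∫ τ in s..1, extendCurve g τ) (-extendCurve g s) s :=
  intervalIntegral.integral_hasDerivAt_left ((continuous_extendCurve g).intervalIntegrable _ _)
    ((continuous_extendCurve g).stronglyMeasurableAtFilter _ _)
    (continuous_extendCurve g).continuousAt

/-- Variation along a leaf.  Let `γ` solve `γ' = A(γ) t` and let `Γ` be the variation of `γ`
whose end value `v = A(γ(1)) v` is tangent to the leaf through `γ(1)`.  By the integrability
condition `w(s) = Γ(s) - s • A(γ(s)) v` solves the linear equation `w' = (A'(γ) w) t` with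
`w(1) = 0`, so that `w = 0` and in particular `Γ(0) = 0`. -/
lemma variation_eq_zero {A : F → F →L[ℝ] F} (hA : ContDiff ℝ ∞ A) (hc : HasCompactSupport A)
    {y t v : F} {γ Γ : C(I, F)}
    (hγ : ∀ s : I, γ s = y - ∫ τ in (s : ℝ)..1,
      extendCurve (applyCurve F F (superpose A γ) (.const I t)) τ)
    (hΓ : ∀ s : I, Γ s = v - ∫ τ in (s : ℝ)..1, extendCurve
      (applyCurve F F (applyCurve F (F →L[ℝ] F) (superpose (fderiv ℝ A) γ) Γ) (.const I t)
        + applyCurve F F (superpose A γ) (.const I v)) τ)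
    (hint : ∀ s : I, fderiv ℝ A (γ s) (A (γ s) v) t = fderiv ℝ A (γ s) (A (γ s) t) v)
    (hv : A y v = v) : Γ 0 = 0 := by
  have hA' : Continuous (fderiv ℝ A) := hA.continuous_fderiv (by simp)
  obtain ⟨K, hKl⟩ := hA.lipschitzWith_of_hasCompactSupport hc (by simp)
  have hK : ∀ z, ‖fderiv ℝ A z‖ ≤ K := fun z => norm_fderiv_le_of_lipschitz ℝ hKl
  -- `g` and `h` extend `γ` and `Γ` to differentiable curves on the whole line
  set g : ℝ → F := fun s => y - ∫ τ in s..1,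
    extendCurve (applyCurve F F (superpose A γ) (.const I t)) τ with hg
  set h : ℝ → F := fun s => v - ∫ τ in s..1, extendCurve
      (applyCurve F F (applyCurve F (F →L[ℝ] F) (superpose (fderiv ℝ A) γ) Γ) (.const I t)
        + applyCurve F F (superpose A γ) (.const I v)) τ with hh
  have hgd : ∀ s ∈ Set.Icc (0 : ℝ) 1, HasDerivAt g (A (g s) t) s := by
    intro s hs
    have h1 := (hasDerivAt_primitive (applyCurve F F (superpose A γ) (.const I t)) s).const_sub y
    rw [neg_neg, extendCurve_of_mem _ hs, applyCurve_apply, superpose_apply hA.continuous,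
      hγ ⟨s, hs⟩] at h1
    exact h1
  have hhd : ∀ s ∈ Set.Icc (0 : ℝ) 1,
      HasDerivAt h (fderiv ℝ A (g s) (h s) t + A (g s) v) s := by
    intro s hs
    have h1 := (hasDerivAt_primitive (applyCurve F F (applyCurve F (F →L[ℝ] F)
      (superpose (fderiv ℝ A) γ) Γ) (.const I t)
        + applyCurve F F (superpose A γ) (.const I v)) s).const_sub v
    rw [neg_neg, extendCurve_of_mem _ hs, ContinuousMap.add_apply, applyCurve_apply,
      applyCurve_apply, applyCurve_apply, superpose_apply hA.continuous, superpose_apply hA',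
      hΓ ⟨s, hs⟩, hγ ⟨s, hs⟩] at h1
    exact h1
  set w : ℝ → F := fun s => h s - s • A (g s) v with hw
  have hwd : ∀ s ∈ Set.Icc (0 : ℝ) 1, HasDerivAt w (fderiv ℝ A (g s) (w s) t) s := by
    intro s hs
    have hAg : HasDerivAt (fun s => A (g s)) (fderiv ℝ A (g s) (A (g s) t)) s :=
      (hA.differentiable (by simp) (g s)).hasFDerivAt.comp_hasDerivAt s (hgd s hs)
    have hAv : HasDerivAt (fun s => A (g s) v) (fderiv ℝ A (g s) (A (g s) t) v) s := by
      simpa using hAg.clm_apply (hasDerivAt_const s v)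
    have h2 := (hhd s hs).sub ((hasDerivAt_id s).smul hAv)
    have h3 := hint ⟨s, hs⟩
    rw [hγ ⟨s, hs⟩] at h3
    change fderiv ℝ A (g s) (A (g s) v) t = fderiv ℝ A (g s) (A (g s) t) v at h3
    refine h2.congr_deriv ?_
    simp only [hw, map_sub, map_smul, sub_apply,
      smul_apply, h3, id]
    module
  have hw1 : w 1 = 0 := by
    simp [hw, hh, hg, hv]
  have hwc : ContinuousOn w (Set.Icc 0 1) := fun s hs => (hwd s hs).continuousAt.continuousWithinAt
  have hEq : Set.EqOn w (fun _ => 0) (Set.Icc 0 1) := by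
    refine ODE_solution_unique_of_mem_Icc_left (v := fun s z => fderiv ℝ A (g s) z t)
      (s := fun _ => Set.univ) (K := K * ‖t‖₊) ?_ hwc ?_ (fun _ _ => trivial)
      continuousOn_const ?_ (fun _ _ => trivial) hw1
    · intro s _
      refine LipschitzWith.lipschitzOnWith (LipschitzWith.of_dist_le_mul fun a b => ?_)
      rw [dist_eq_norm, dist_eq_norm, ← sub_apply, ← map_sub]
      calc ‖fderiv ℝ A (g s) (a - b) t‖ ≤ ‖fderiv ℝ A (g s)‖ * ‖a - b‖ * ‖t‖ :=
            ContinuousLinearMap.le_opNorm₂ _ _ _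
        _ ≤ K * ‖a - b‖ * ‖t‖ := by gcongr; exact hK _
        _ = K * ‖t‖ * ‖a - b‖ := by ring
    · exact fun s hs => (hwd s ⟨hs.1.le, hs.2⟩).hasDerivWithinAt
    · intro s _
      simpa using hasDerivWithinAt_const s (Set.Iic s) (0 : F)
  have h0 := hEq (show (0 : ℝ) ∈ Set.Icc 0 1 by simp)
  have : Γ 0 = h 0 := hΓ 0
  rw [this]
  simpa [hw] using h0

/-- First integrals of an integrable projection field.  The value `f y` is the initial point of
the curve `γ` with `γ' = A(γ) (y - x)` and `γ(1) = y`.  It is annihilated by all vectors fixed by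
`A`, and its derivative at `x` is the complementary projection `id - A x`. -/
lemma exists_first_integral {A : F → F →L[ℝ] F} (hA : ContDiff ℝ ∞ A)
    (hc : HasCompactSupport A) (x : F)
    (hint : ∀ᶠ q in 𝓝 x, ∀ v t, fderiv ℝ A q (A q v) t = fderiv ℝ A q (A q t) v) :
    ∃ f : F → F, (∀ᶠ y in 𝓝 x, ContDiffAt ℝ ∞ f y ∧ ∀ v, A y v = v → fderiv ℝ f y v = 0) ∧
      ∀ v, fderiv ℝ f x v = v - A x v := by
  have hN := contDiff_superpose hA hc
  let cst : F →L[ℝ] C(I, F) := ContinuousLinearMap.const ℝ I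
  let B := applyCurve F F
  let J := primitiveCurve F
  have hcst : ∀ v s, cst v s = v := fun _ _ => rfl
  let H : F × C(I, F) → C(I, F) := fun p =>
    p.2 - cst p.1 + J (B (superpose A p.2) (cst (p.1 - x)))
  have hH : ContDiff ℝ ∞ H := by
    have h1 : ContDiff ℝ ∞ fun p : F × C(I, F) => superpose A p.2 := hN.comp contDiff_snd
    have h2 : ContDiff ℝ ∞ fun p : F × C(I, F) => B (superpose A p.2) :=
      contDiff_applyCurve.comp h1
    have h3 : ContDiff ℝ ∞ fun p : F × C(I, F) => cst (p.1 - x) :=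
      (ContinuousLinearMap.contDiff (F := C(I, F)) cst).comp (contDiff_fst.sub contDiff_const)
    have h4 : ContDiff ℝ ∞ fun p : F × C(I, F) => cst p.1 :=
      (ContinuousLinearMap.contDiff (F := C(I, F)) cst).comp contDiff_fst
    exact (contDiff_snd.sub h4).add
      ((ContinuousLinearMap.contDiff (E := C(I, F)) (F := C(I, F)) J).comp (h2.clm_apply h3))
  have hHx : ∀ γ, H (x, γ) = γ - cst x := by
    intro γ
    simp [H]
  have hid : fderiv ℝ H (x, cst x) ∘L .inr ℝ F C(I, F) = ContinuousLinearMap.id ℝ C(I, F) := by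
    have h1 : HasFDerivAt (fun γ => H (x, γ)) (fderiv ℝ H (x, cst x) ∘L .inr ℝ F C(I, F)) (cst x) :=
      (hH.differentiable (by simp) (x, cst x)).hasFDerivAt.comp (cst x)
        (hasFDerivAt_prodMk_right x (cst x))
    have h2 : HasFDerivAt (fun γ => H (x, γ)) (ContinuousLinearMap.id ℝ C(I, F)) (cst x) := by
      simp_rw [hHx]
      exact (hasFDerivAt_id _).sub_const _
    exact h1.unique h2
  obtain ⟨ψ, hψx, hψ⟩ := exists_smooth_implicit hH (x, cst x) hid
  simp only at hψx hψ
  have hHu : H (x, cst x) = 0 := by rw [hHx, sub_self]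
  rw [hHu] at hψ
  -- the linearized equation for the variation of the solution
  have hlin : ∀ᶠ y in 𝓝 x, ∀ v, fderiv ℝ ψ y v = cst v -
      J (B (applyCurve F (F →L[ℝ] F) (superpose (fderiv ℝ A) (ψ y)) (fderiv ℝ ψ y v))
        (cst (y - x)) + B (superpose A (ψ y)) (cst v)) := by
    filter_upwards [hψ, hψ.eventually_nhds] with y hy hny v
    have hd : HasFDerivAt ψ (fderiv ℝ ψ y) y := (hy.1.differentiableAt (by simp)).hasFDerivAt
    have h2 := hasFDerivAt_applyCurve_superpose hA hc hd
    have h3 : HasFDerivAt (fun y => cst (y - x)) cst y :=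
      cst.hasFDerivAt.comp y ((hasFDerivAt_id y).sub_const x)
    have h4 : HasFDerivAt (fun y => H (y, ψ y)) _ y :=
      (hd.sub cst.hasFDerivAt).add (J.hasFDerivAt.comp y (h2.clm_apply h3))
    have h5 : HasFDerivAt (fun y => H (y, ψ y)) (0 : F →L[ℝ] C(I, F)) y :=
      (hasFDerivAt_const (0 : C(I, F)) y).congr_of_eventuallyEq (hny.mono fun z hz => hz.2)
    have h6 := DFunLike.congr_fun (h4.unique h5) v
    have h7 : fderiv ℝ ψ y v - cst v + J (B (superpose A (ψ y)) (cst v) +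
        B (applyCurve F (F →L[ℝ] F) (superpose (fderiv ℝ A) (ψ y)) (fderiv ℝ ψ y v))
        (cst (y - x))) = 0 := h6
    rw [eq_sub_iff_add_eq, add_comm (B (applyCurve _ _ _ _) _), ← sub_eq_zero, ← h7]
    abel
  let ev : C(I, F) →L[ℝ] F := ContinuousMap.evalCLM ℝ 0
  have hev : ∀ g, ev g = g 0 := fun _ => rfl
  have hfd : ∀ᶠ y in 𝓝 x, ∀ v, fderiv ℝ (fun y => ev (ψ y)) y v = fderiv ℝ ψ y v 0 := by
    filter_upwards [hψ] with y hy v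
    have hd : HasFDerivAt ψ (fderiv ℝ ψ y) y := (hy.1.differentiableAt (by simp)).hasFDerivAt
    have h1 : HasFDerivAt (fun y => ev (ψ y)) (ev ∘L fderiv ℝ ψ y) y :=
      (ContinuousLinearMap.hasFDerivAt (E := C(I, F)) (x := ψ y) ev).comp y hd
    rw [h1.fderiv]
    rfl
  refine ⟨fun y => ev (ψ y), ?_, ?_⟩
  · obtain ⟨r, hr, hball⟩ := Metric.eventually_nhds_iff_ball.1 hint
    have hcont : ContinuousAt ψ x := hψ.self_of_nhds.1.continuousAt
    have hnear : ∀ᶠ y in 𝓝 x, dist (ψ y) (cst x) < r := by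
      rw [← hψx]
      exact hcont.eventually (Metric.ball_mem_nhds _ hr)
    filter_upwards [hψ, hlin, hfd, hnear] with y hy hly hfy hry
    refine ⟨(ContinuousLinearMap.contDiff (E := C(I, F)) ev).contDiffAt.comp y hy.1, fun v hv => ?_⟩
    rw [hfy]
    refine variation_eq_zero hA hc (y := y) (t := y - x) (v := v) (γ := ψ y) ?_ ?_ ?_ hv
    · intro s
      have h1 : ψ y s - y + J (B (superpose A (ψ y)) (cst (y - x))) s = 0 :=
        DFunLike.congr_fun hy.2 s
      have h2 : ψ y s = y - J (B (superpose A (ψ y)) (cst (y - x))) s := by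
        rw [← sub_eq_zero, ← h1]
        abel
      exact h2
    · intro s
      exact DFunLike.congr_fun (hly v) s
    · intro s
      exact hball _ (lt_of_le_of_lt (ContinuousMap.dist_apply_le_dist s) hry) v (y - x)
  · intro v
    rw [hfd.self_of_nhds, hlin.self_of_nhds, hψx]
    have h1 : B (applyCurve F (F →L[ℝ] F) (superpose (fderiv ℝ A) (cst x)) (fderiv ℝ ψ x v))
        (cst (x - x)) + B (superpose A (cst x)) (cst v) = cst (A x v) := by
      ext s
      simp [B, cst, superpose_apply hA.continuous]
    have h2 : J (cst (A x v)) 0 = A x v := by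
      have h3 : extendCurve (cst (A x v)) = fun _ => A x v := rfl
      rw [primitiveCurve_apply, h3]
      simp
    rw [h1, ContinuousMap.sub_apply, h2, hcst]

end Frobenius

/-! ### The projection field of a path geometry -/

section Geometry

variable {n : ℕ} {U : Set F} {E V : F → Submodule ℝ F}

/-- Near any point there is a smooth family of projections `A y` onto `V y` with a common kernel,
cut off to be globally defined and compactly supported. -/
lemma VSPathGeometry.exists_projection (P : VSPathGeometry n U E V) {x : F} (hx : x ∈ U) :
    ∃ (A : F → F →L[ℝ] F) (T : F →L[ℝ] (Fin n → ℝ)), ContDiff ℝ ∞ A ∧ HasCompactSupport A ∧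
      (∀ y ∈ U, ∀ v, A y v ∈ V y) ∧
      ∀ᶠ y in 𝓝 x, (∀ v ∈ V y, A y v = v) ∧ (∀ v, T (A y v) = T v) ∧
        ∀ v, T v = 0 → A y v = 0 := by
  obtain ⟨W, hWU, hWo, hxW, η, hη, hV⟩ := P.smoothV x hx
  let M : F → (Fin n → ℝ) →L[ℝ] F := fun y =>
    ∑ i, (ContinuousLinearMap.proj (R := ℝ) (φ := fun _ : Fin n => ℝ) i).smulRight (η i y)
  have hMapp : ∀ y a, M y a = ∑ i, a i • η i y := by
    intro y a
    simp [M]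
  have hMV : ∀ y ∈ W, ∀ v, v ∈ V y ↔ ∃ a, M y a = v := by
    intro y hy v
    rw [hV y hy, Submodule.mem_span_range_iff_exists_fun]
    simp_rw [hMapp]
  have hM : ContDiffOn ℝ ∞ M W := by
    refine ContDiffOn.sum fun i _ => ?_
    exact (ContinuousLinearMap.smulRightL ℝ (Fin n → ℝ) F
      (ContinuousLinearMap.proj i)).contDiff.comp_contDiffOn (hη i)
  -- a left inverse of the frame at `x`
  have hli : LinearIndependent ℝ fun i => η i x := by
    rw [linearIndependent_iff_card_eq_finrank_span, Set.finrank, ← hV x hxW, P.rankV x hx]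
    simp
  have hinj : LinearMap.ker (M x : (Fin n → ℝ) →ₗ[ℝ] F) = ⊥ := by
    rw [LinearMap.ker_eq_bot']
    intro a ha
    have ha' : ∑ i, a i • η i x = 0 := by rw [← hMapp]; exact ha
    exact funext (Fintype.linearIndependent_iff.1 hli a ha')
  obtain ⟨T₀, hT₀⟩ := LinearMap.exists_leftInverse_of_injective _ hinj
  let T : F →L[ℝ] (Fin n → ℝ) := LinearMap.toContinuousLinearMap T₀
  have hTx : T ∘L M x = 1 := by
    ext1 a
    exact DFunLike.congr_fun hT₀ a
  let W₁ : Set F := W ∩ (fun y => T ∘L M y) ⁻¹' {R | IsUnit R}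
  have hTM : ContDiffOn ℝ ∞ (fun y => T ∘L M y) W := contDiffOn_const.clm_comp hM
  have hW₁o : IsOpen W₁ := hTM.continuousOn.isOpen_inter_preimage hWo Units.isOpen
  have hxW₁ : x ∈ W₁ := ⟨hxW, by simp [hTx]⟩
  let A₀ : F → F →L[ℝ] F := fun y => M y ∘L Ring.inverse (T ∘L M y) ∘L T
  have hA₀ : ∀ y ∈ W₁, ContDiffAt ℝ ∞ A₀ y := by
    rintro y ⟨hyW, R, hR⟩
    have h1 : ContDiffAt ℝ ∞ M y := hM.contDiffAt (hWo.mem_nhds hyW)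
    have h2 : ContDiffAt ℝ ∞ (fun y => T ∘L M y) y := hTM.contDiffAt (hWo.mem_nhds hyW)
    have h3 : ContDiffAt ℝ ∞ Ring.inverse (T ∘L M y) := by
      rw [← show (R : _) = T ∘L M y from hR]
      exact contDiffAt_ringInverse ℝ R
    have h4 : ContDiffAt ℝ ∞ (fun y => Ring.inverse (T ∘L M y)) y :=
      ContDiffAt.comp (F := (Fin n → ℝ) →L[ℝ] (Fin n → ℝ)) (g := Ring.inverse)
        (f := fun y => T ∘L M y) y h3 h2
    exact h1.clm_comp (h4.clm_comp contDiffAt_const)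
  obtain ⟨r, hr, hball⟩ := Metric.isOpen_iff.1 hW₁o x hxW₁
  let χ : ContDiffBump x := ⟨r / 4, r / 2, by positivity, by linarith⟩
  have hχ : tsupport χ ⊆ W₁ := by
    rw [χ.tsupport_eq]
    exact (Metric.closedBall_subset_ball (by change r / 2 < r; linarith)).trans hball
  refine ⟨fun y => χ y • A₀ y, T, ?_, ?_, ?_, ?_⟩
  · rw [contDiff_iff_contDiffAt]
    intro y
    by_cases hy : y ∈ tsupport χ
    · exact χ.contDiff.contDiffAt.smul (hA₀ y (hχ hy))
    · have h0 : (fun y => χ y • A₀ y) =ᶠ[𝓝 y] fun _ => 0 := by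
        filter_upwards [notMem_tsupport_iff_eventuallyEq.1 hy] with z hz
        simp [hz]
      exact contDiffAt_const.congr_of_eventuallyEq h0
  · exact χ.hasCompactSupport.smul_right
  · intro y hy v
    by_cases h : y ∈ tsupport χ
    · rw [smul_apply]
      exact Submodule.smul_mem _ _ ((hMV y (hχ h).1 _).2 ⟨_, rfl⟩)
    · simp [image_eq_zero_of_notMem_tsupport h]
  · filter_upwards [χ.eventuallyEq_one, hW₁o.mem_nhds hxW₁] with y hy hyW
    have hA : χ y • A₀ y = A₀ y := by
      rw [hy]; simp
    have hl : ∀ a, Ring.inverse (T ∘L M y) (T (M y a)) = a := fun a =>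
      DFunLike.congr_fun (Ring.inverse_mul_cancel _ hyW.2) a
    have hr' : ∀ a, T (M y (Ring.inverse (T ∘L M y) a)) = a := fun a =>
      DFunLike.congr_fun (Ring.mul_inverse_cancel _ hyW.2) a
    rw [hA]
    refine ⟨fun v hv => ?_, fun v => hr' (T v), fun v hv => ?_⟩
    · obtain ⟨a, rfl⟩ := (hMV y hyW.1 v).1 hv
      exact congrArg (M y) (hl a)
    · change M y (Ring.inverse (T ∘L M y) (T v)) = 0
      rw [hv, map_zero, map_zero]

set_option linter.unusedSectionVars false in
/-- Involutivity of `V` as the integrability condition for a projection field `A` onto `V`: the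
bracket of `A v` and `A t` lies in `V`, where `A` is the identity, and also in the common
kernel. -/
lemma VSPathGeometry.integrable_projection (P : VSPathGeometry n U E V) {x : F} (hx : x ∈ U)
    {A : F → F →L[ℝ] F} {T : F →L[ℝ] (Fin n → ℝ)} (hA : ContDiff ℝ ∞ A)
    (hAV : ∀ y ∈ U, ∀ v, A y v ∈ V y)
    (hAT : ∀ᶠ y in 𝓝 x, (∀ v ∈ V y, A y v = v) ∧ (∀ v, T (A y v) = T v) ∧
        ∀ v, T v = 0 → A y v = 0) :
    ∀ᶠ q in 𝓝 x, ∀ v t, fderiv ℝ A q (A q v) t = fderiv ℝ A q (A q t) v := by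
  filter_upwards [hAT, hAT.eventually_nhds, P.isOpen.mem_nhds hx] with q hq hnq hqU v t
  have hd : ∀ v, HasFDerivAt (fun y => A y v) ((fderiv ℝ A q).flip v) q := by
    intro v
    have h := (hA.differentiable (by simp) q).hasFDerivAt.clm_apply (hasFDerivAt_const v q)
    refine h.congr_fderiv ?_
    simp
  have hs : ∀ v, ContDiffOn ℝ ∞ (fun y => A y v) U := fun v =>
    (hA.clm_apply contDiff_const).contDiffOn
  have hT : ∀ v k, T (fderiv ℝ A q k v) = 0 := by
    intro v k
    have h1 : HasFDerivAt (fun y => T (A y v)) (T ∘L (fderiv ℝ A q).flip v) q :=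
      T.hasFDerivAt.comp q (hd v)
    have h2 : HasFDerivAt (fun y => T (A y v)) (0 : F →L[ℝ] (Fin n → ℝ)) q :=
      (hasFDerivAt_const (T v) q).congr_of_eventuallyEq (hnq.mono fun y hy => hy.2.1 v)
    exact DFunLike.congr_fun (h1.unique h2) k
  have hb := P.involutive (fun y => A y v) (fun y => A y t) (hs v) (hs t)
    (fun y hy => hAV y hy v) (fun y hy => hAV y hy t) q hqU
  rw [vlie, (hd t).fderiv, (hd v).fderiv, ContinuousLinearMap.flip_apply,
    ContinuousLinearMap.flip_apply] at hb
  rw [← sub_eq_zero, ← hq.1 _ hb]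
  exact hq.2.2 _ (by rw [map_sub, hT, hT, sub_zero])

end Geometry

/-- Theorem 3.3 (1) of the paper.  Let `(M,E,V)` be a path geometry
for which the subbundle `V` is involutive.  Then locally around each point `x ∈ M`
there exists a distinguished Weyl structure, i.e. a nowhere-vanishing local smooth
section `α₀` of `E*` with `D(α₀) = 0`, equivalently `d(L(α₀)) = 0`.  Here `L(α₀)` is
the unique one-form `α` with `α|_E = α₀`, `α|_V = 0` and `dα|_{E×V} = 0`; the
conclusion is formulated directly for `α = L(α₀)`: locally around `x` there is a
smooth one-form `α` which vanishes on `V`, whose restriction to the line bundle `E`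
is nowhere vanishing (this restriction is the distinguished scale `α₀`), and which is
closed (`dα = 0`, which encodes `D(α₀) = 0` and in particular `dα|_{E×V} = 0`,
i.e. `α = L(α₀)`). -/
theorem distinguished_scale_exists_locally {n : ℕ} {U : Set F}
    {E V : F → Submodule ℝ F} (P : VSPathGeometry n U E V) :
    ∀ x ∈ U, ∃ U' : Set F, IsOpen U' ∧ x ∈ U' ∧ U' ⊆ U ∧
      ∃ α : F → F →L[ℝ] ℝ, ContDiffOn ℝ (⊤ : ℕ∞) α U' ∧
        (∀ y ∈ U', ∀ v ∈ V y, α y v = 0) ∧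
        (∀ y ∈ U', ∃ v ∈ E y, α y v ≠ 0) ∧
        (∀ y ∈ U', ∀ v w : F, fderiv ℝ α y v w = fderiv ℝ α y w v) := by
  intro x hx
  obtain ⟨A, T, hA, hc, hAV, hAT⟩ := P.exists_projection hx
  obtain ⟨f, hf, hfx⟩ := exists_first_integral hA hc x (P.integrable_projection hx hA hAV hAT)
  obtain ⟨W, -, hWo, hxW, ξ, hξ, hE⟩ := P.smoothE x hx
  have hk : ξ x - A x (ξ x) ≠ 0 := by
    intro h
    have h1 : ξ x ∈ E x ⊓ V x := by
      refine ⟨by rw [(hE x hxW).2]; exact Submodule.mem_span_singleton_self _, ?_⟩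
      rw [sub_eq_zero.1 h]
      exact hAV x hx _
    rw [P.inf_bot x hx, Submodule.mem_bot] at h1
    exact (hE x hxW).1 h1
  obtain ⟨l, hl⟩ := SeparatingDual.exists_ne_zero (R := ℝ) hk
  let g : F → ℝ := fun y => l (f y)
  have hg : ∀ y, ContDiffAt ℝ ∞ f y → ContDiffAt ℝ ∞ g y := fun y hy =>
    l.contDiff.contDiffAt.comp y hy
  have hgd : ∀ y, ContDiffAt ℝ ∞ f y → ∀ v, fderiv ℝ g y v = l (fderiv ℝ f y v) := by
    intro y hy v
    have h1 : HasFDerivAt g (l ∘L fderiv ℝ f y) y :=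
      l.hasFDerivAt.comp y (hy.differentiableAt (by simp)).hasFDerivAt
    rw [h1.fderiv]
    rfl
  have hne : ∀ᶠ y in 𝓝 x, fderiv ℝ g y (ξ y) ≠ 0 := by
    have h1 : ContinuousAt (fun y => fderiv ℝ g y (ξ y)) x :=
      (((hg x hf.self_of_nhds.1).fderiv_right (m := ∞) (by simp)).continuousAt).clm_apply
        (hξ.continuousOn.continuousAt (hWo.mem_nhds hxW))
    refine h1.eventually_ne ?_
    rw [hgd x hf.self_of_nhds.1, hfx]
    exact hl
  obtain ⟨U', hU', hU'o, hxU'⟩ := eventually_nhds_iff.1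
    (((hf.and hne).and (hAT.and (hWo.mem_nhds hxW))).and (P.isOpen.mem_nhds hx))
  refine ⟨U', hU'o, hxU', fun y hy => (hU' y hy).2, fderiv ℝ g, ?_, ?_, ?_, ?_⟩
  · intro y hy
    exact ((hg y (hU' y hy).1.1.1.1).fderiv_right (by simp)).contDiffWithinAt
  · intro y hy v hv
    obtain ⟨⟨⟨⟨hfy, hfv⟩, -⟩, ⟨⟨hAv, -⟩, -⟩⟩, -⟩ := hU' y hy
    rw [hgd y hfy, hfv v (hAv v hv), map_zero]
  · intro y hy
    obtain ⟨⟨⟨-, hny⟩, ⟨-, hyW⟩⟩, -⟩ := hU' y hy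
    refine ⟨ξ y, ?_, hny⟩
    rw [(hE y hyW).2]
    exact Submodule.mem_span_singleton_self _
  · intro y hy v w
    exact (hg y (hU' y hy).1.1.1.1).isSymmSndFDerivAt
      (by simpa using WithTop.coe_le_coe.2 (le_top : (2 : ℕ∞) ≤ ⊤)) v w
end
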